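/- Elementary double negation: for any unit chain F = s₀ ⋗ s₁ ⋗ ⋯ ⋗ s_k (k ∈ ℕ, all sᵢ ∈ 𝒮) and any valuation frame M, it holds that [M ⊨ F] = [M ⊨ recursiveReduce(recursiveReduce(F))]. -/

import Mathlib

/-!
On formulas in unit chain expansion, `recursiveReduce` acts as semantic negation: it sends the
value `v ∈ {0, 1}` to `1 - v` (`Frame.valAux_recursiveReduce`). Its output is again in unit chain
expansion (`UCE.recursiveReduce`), so applying it twice gives `1 - (1 - v) = v`. The key point is
that distributing `s ⋗ -` over ∧ and ∨ does not change values (`Frame.valAux_distOb`).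
-/

namespace GradualLogic

/-- Elements of 𝒮 = 𝒜 ∪ {⊤, ⊥}. -/
inductive GS (A : Type) : Type
  | lit : A → GS A
  | top : GS A
  | bot : GS A

/-- Complement on 𝒮, given the involutive complement `c` on literals. -/
def GS.compl {A : Type} (c : A → A) : GS A → GS A
  | .lit a => .lit (c a)
  | .top => .bot
  | .bot => .top

/-- Formulas of gradual classical logic: F ::= s | F ∧ F | F ∨ F | ¬F | F ⋗ F. -/
inductive GF (A : Type) : Type
  | base : GS A → GF A
  | conj : GF A → GF A → GF A
  | disj : GF A → GF A → GF A
  | neg  : GF A → GF A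
  | obat : GF A → GF A → GF A

/-- One-step reduction (closure of the ¬- and ⋗-rules under subformula contexts). -/
inductive Step {A : Type} (c : A → A) : GF A → GF A → Prop
  | neg1 (x : GS A) :
      Step c (GF.neg (GF.base x)) (GF.base (GS.compl c x))
  | neg2 (F₁ F₂ : GF A) :
      Step c (GF.neg (GF.conj F₁ F₂)) (GF.disj (GF.neg F₁) (GF.neg F₂))
  | neg3 (F₁ F₂ : GF A) :
      Step c (GF.neg (GF.disj F₁ F₂)) (GF.conj (GF.neg F₁) (GF.neg F₂))
  | neg4 (x : GS A) (F₂ : GF A) :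
      Step c (GF.neg (GF.obat (GF.base x) F₂))
        (GF.disj (GF.base (GS.compl c x)) (GF.obat (GF.base x) (GF.neg F₂)))
  | ob1 (F₁ F₂ F₃ : GF A) :
      Step c (GF.obat (GF.obat F₁ F₂) F₃)
        (GF.conj (GF.obat F₁ F₃)
          (GF.disj (GF.obat F₁ F₂) (GF.obat F₁ (GF.obat F₂ F₃))))
  | ob2 (F₁ F₂ F₃ : GF A) :
      Step c (GF.obat (GF.conj F₁ F₂) F₃) (GF.conj (GF.obat F₁ F₃) (GF.obat F₂ F₃))
  | ob3 (F₁ F₂ F₃ : GF A) :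
      Step c (GF.obat (GF.disj F₁ F₂) F₃) (GF.disj (GF.obat F₁ F₃) (GF.obat F₂ F₃))
  | ob4 (F₁ F₂ F₃ : GF A) :
      Step c (GF.obat F₁ (GF.conj F₂ F₃)) (GF.conj (GF.obat F₁ F₂) (GF.obat F₁ F₃))
  | ob5 (F₁ F₂ F₃ : GF A) :
      Step c (GF.obat F₁ (GF.disj F₂ F₃)) (GF.disj (GF.obat F₁ F₂) (GF.obat F₁ F₃))
  | conj_left {F F' : GF A} (G : GF A) :
      Step c F F' → Step c (GF.conj F G) (GF.conj F' G)
  | conj_right (F : GF A) {G G' : GF A} :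
      Step c G G' → Step c (GF.conj F G) (GF.conj F G')
  | disj_left {F F' : GF A} (G : GF A) :
      Step c F F' → Step c (GF.disj F G) (GF.disj F' G)
  | disj_right (F : GF A) {G G' : GF A} :
      Step c G G' → Step c (GF.disj F G) (GF.disj F G')
  | neg_congr {F F' : GF A} :
      Step c F F' → Step c (GF.neg F) (GF.neg F')
  | obat_left {F F' : GF A} (G : GF A) :
      Step c F F' → Step c (GF.obat F G) (GF.obat F' G)
  | obat_right (F : GF A) {G G' : GF A} :
      Step c G G' → Step c (GF.obat F G) (GF.obat F G')

/-- `Reduces c F G`: F ↦* G in finitely many (possibly zero) steps. -/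
def Reduces {A : Type} (c : A → A) : GF A → GF A → Prop :=
  Relation.ReflTransGen (Step c)

/-- Unit chains s₀ ⋗ s₁ ⋗ ⋯ ⋗ s_{k+1} (right-associated, all components in 𝒮). -/
inductive IsUnitChain {A : Type} : GF A → Prop
  | base (x y : GS A) : IsUnitChain (GF.obat (GF.base x) (GF.base y))
  | cons (x : GS A) {F : GF A} : IsUnitChain F → IsUnitChain (GF.obat (GF.base x) F)

/-- Unit chain expansion: built from elements of 𝒮 and unit chains using only ∧ and ∨. -/
inductive UCE {A : Type} : GF A → Prop
  | base (x : GS A) : UCE (GF.base x)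
  | chain {F : GF A} : IsUnitChain F → UCE F
  | conj {F G : GF A} : UCE F → UCE G → UCE (GF.conj F G)
  | disj {F G : GF A} : UCE F → UCE G → UCE (GF.disj F G)

/-- Formulas in which ¬ does not occur. -/
inductive NegFree {A : Type} : GF A → Prop
  | base (x : GS A) : NegFree (GF.base x)
  | conj {F G : GF A} : NegFree F → NegFree G → NegFree (GF.conj F G)
  | disj {F G : GF A} : NegFree F → NegFree G → NegFree (GF.disj F G)
  | obat {F G : GF A} : NegFree F → NegFree G → NegFree (GF.obat F G)

/-- A valuation frame (I, J): local interpretation I with the required conditions;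
the global interpretation J is determined by I and is built into `Frame.val` below. -/
structure Frame (A : Type) (c : A → A) where
  I : List (GS A) → GS A → ℕ
  I01 : ∀ ψ x, I ψ x = 0 ∨ I ψ x = 1
  Itop : ∀ ψ, I ψ GS.top = 1
  Ibot : ∀ ψ, I ψ GS.bot = 0
  Icompl : ∀ ψ x, I ψ (GS.compl c x) = 1 - I ψ x
  Isync : ∀ ψ ψ' x, ψ.length = ψ'.length → I ψ x = I ψ' x

/-- The valuation of a formula in unit chain expansion, relative to the sequence ψ of
𝒮-elements already traversed: a unit chain s₀ ⋗ ⋯ ⋗ s_k receives the global value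
J(s₀.⋯.s_k) (the min of the local values along its prefixes), ∧ is min, ∨ is max.
(The value on formulas not in unit chain expansion is junk and never used.) -/
def Frame.valAux {A : Type} {c : A → A} (M : Frame A c) : List (GS A) → GF A → ℕ
  | ψ, GF.base x => M.I ψ x
  | ψ, GF.conj F G => min (M.valAux ψ F) (M.valAux ψ G)
  | ψ, GF.disj F G => max (M.valAux ψ F) (M.valAux ψ G)
  | _, GF.neg _ => 0
  | ψ, GF.obat (GF.base x) G => min (M.I ψ x) (M.valAux (ψ ++ [x]) G)
  | _, GF.obat _ _ => 0

/-- `[M ⊨ F]` for F in unit chain expansion. -/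
def Frame.val {A : Type} {c : A → A} (M : Frame A c) (F : GF A) : ℕ :=
  M.valAux [] F

/-- Distribute `s ⋗ -` over the ∧/∨-structure of a formula (the ⋗-reductions 4 and 5). -/
def distOb {A : Type} (x : GS A) : GF A → GF A
  | GF.conj F G => GF.conj (distOb x F) (distOb x G)
  | GF.disj F G => GF.disj (distOb x F) (distOb x G)
  | F => GF.obat (GF.base x) F

/-- recursiveReduce on formulas in unit chain expansion: swap ∧/∨, complement the
non-chain 𝒮-elements, replace a chain with head s and tail T by
sᶜ ∨ (s ⋗ recursiveReduce T), reduced into unit chain expansion via ⋗-reductions. -/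
def recursiveReduce {A : Type} (c : A → A) : GF A → GF A
  | GF.base x => GF.base (GS.compl c x)
  | GF.conj F G => GF.disj (recursiveReduce c F) (recursiveReduce c G)
  | GF.disj F G => GF.conj (recursiveReduce c F) (recursiveReduce c G)
  | GF.obat (GF.base x) F =>
      GF.disj (GF.base (GS.compl c x)) (distOb x (recursiveReduce c F))
  | GF.obat F G => GF.obat F G
  | GF.neg F => GF.neg F

/-- Validity: every unit chain expansion that F reduces to receives value 1 in
every valuation frame. -/
def Valid {A : Type} (c : A → A) (F : GF A) : Prop :=
  ∀ (M : Frame A c) (G : GF A), UCE G → Reduces c F G → M.val G = 1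

/-- The fifteen shape pairs of the bisimulation theorem. -/
inductive ShapePair {A : Type} (c : A → A) : GF A → GF A → Prop
  | s1 (Fa Fb Fc : GF A) :
      ShapePair c (GF.obat (GF.conj Fa Fb) Fc) (GF.conj (GF.obat Fa Fc) (GF.obat Fb Fc))
  | s2 (Fa Fb Fc : GF A) :
      ShapePair c (GF.obat (GF.disj Fa Fb) Fc) (GF.disj (GF.obat Fa Fc) (GF.obat Fb Fc))
  | s3 (Fa Fb Fc : GF A) :
      ShapePair c (GF.obat Fa (GF.conj Fb Fc)) (GF.conj (GF.obat Fa Fb) (GF.obat Fa Fc))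
  | s4 (Fa Fb Fc : GF A) :
      ShapePair c (GF.obat Fa (GF.disj Fb Fc)) (GF.disj (GF.obat Fa Fb) (GF.obat Fa Fc))
  | s5 (Fa Fb Fc : GF A) :
      ShapePair c (GF.obat (GF.obat Fa Fb) Fc)
        (GF.conj (GF.obat Fa Fc) (GF.disj (GF.obat Fa Fb) (GF.obat Fa (GF.obat Fb Fc))))
  | s6 (x : GS A) :
      ShapePair c (GF.neg (GF.base x)) (GF.base (GS.compl c x))
  | s7 (F₁ F₂ : GF A) :
      ShapePair c (GF.neg (GF.conj F₁ F₂)) (GF.disj (GF.neg F₁) (GF.neg F₂))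
  | s8 (F₁ F₂ : GF A) :
      ShapePair c (GF.neg (GF.disj F₁ F₂)) (GF.conj (GF.neg F₁) (GF.neg F₂))
  | s9 (x : GS A) (F₂ : GF A) :
      ShapePair c (GF.neg (GF.obat (GF.base x) F₂))
        (GF.disj (GF.base (GS.compl c x)) (GF.obat (GF.base x) (GF.neg F₂)))
  | s10 (Fa : GF A) : ShapePair c (GF.disj Fa Fa) Fa
  | s11 (Fa : GF A) : ShapePair c (GF.conj Fa Fa) Fa
  | s12 (Fa Fb : GF A) : ShapePair c (GF.conj Fa Fb) (GF.conj Fb Fa)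
  | s13 (Fa Fb : GF A) : ShapePair c (GF.disj Fa Fb) (GF.disj Fb Fa)
  | s14 (Fa Fb Fc : GF A) :
      ShapePair c (GF.conj Fa (GF.conj Fb Fc)) (GF.conj (GF.conj Fa Fb) Fc)
  | s15 (Fa Fb Fc : GF A) :
      ShapePair c (GF.disj Fa (GF.disj Fb Fc)) (GF.disj (GF.disj Fa Fb) Fc)

/-- `ReplaceAt R F F'`: F' is obtained from F by replacing one occurrence of a
subformula related by R (in either direction). -/
inductive ReplaceAt {A : Type} (R : GF A → GF A → Prop) : GF A → GF A → Prop
  | here {F F' : GF A} : R F F' → ReplaceAt R F F'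
  | here_rev {F F' : GF A} : R F' F → ReplaceAt R F F'
  | conj_left {F F' : GF A} (G : GF A) :
      ReplaceAt R F F' → ReplaceAt R (GF.conj F G) (GF.conj F' G)
  | conj_right (F : GF A) {G G' : GF A} :
      ReplaceAt R G G' → ReplaceAt R (GF.conj F G) (GF.conj F G')
  | disj_left {F F' : GF A} (G : GF A) :
      ReplaceAt R F F' → ReplaceAt R (GF.disj F G) (GF.disj F' G)
  | disj_right (F : GF A) {G G' : GF A} :
      ReplaceAt R G G' → ReplaceAt R (GF.disj F G) (GF.disj F G')
  | neg_congr {F F' : GF A} :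
      ReplaceAt R F F' → ReplaceAt R (GF.neg F) (GF.neg F')
  | obat_left {F F' : GF A} (G : GF A) :
      ReplaceAt R F F' → ReplaceAt R (GF.obat F G) (GF.obat F' G)
  | obat_right (F : GF A) {G G' : GF A} :
      ReplaceAt R G G' → ReplaceAt R (GF.obat F G) (GF.obat F G')

/-- Values are Boolean; only the upper bound is needed, so that `v ↦ 1 - v` is an involution
on them despite truncated subtraction. -/
lemma Frame.valAux_le_one {A : Type} {c : A → A} (M : Frame A c) (F : GF A) :
    ∀ ψ, M.valAux ψ F ≤ 1 := by
  have hI : ∀ ψ x, M.I ψ x ≤ 1 := fun ψ x => by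
    rcases M.I01 ψ x with h | h <;> omega
  induction F with
  | base x => intro ψ; simpa [Frame.valAux] using hI ψ x
  | conj F G ihF ihG => intro ψ; simp [Frame.valAux, ihF ψ]
  | disj F G ihF ihG => intro ψ; simp [Frame.valAux, ihF ψ, ihG ψ]
  | neg F _ => intro ψ; simp [Frame.valAux]
  | obat F G _ _ => intro ψ; cases F <;> simp [Frame.valAux, hI ψ]

/-- Pushing `x ⋗ -` through ∧ and ∨ is sound because `min a -` distributes over min and max. -/
lemma Frame.valAux_distOb {A : Type} {c : A → A} (M : Frame A c) (x : GS A) (ψ : List (GS A))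
    (F : GF A) :
    M.valAux ψ (distOb x F) = min (M.I ψ x) (M.valAux (ψ ++ [x]) F) := by
  induction F with
  | base y => simp [distOb, Frame.valAux]
  | conj F G ihF ihG => simp only [distOb, Frame.valAux, ihF, ihG]; omega
  | disj F G ihF ihG => simp only [distOb, Frame.valAux, ihF, ihG]; omega
  | neg F _ => simp [distOb, Frame.valAux]
  | obat F G _ _ => simp [distOb, Frame.valAux]

lemma UCE.distOb {A : Type} (x : GS A) {F : GF A} (hF : UCE F) : UCE (distOb x F) := by
  induction hF with
  | base y => exact .chain (.base x y)
  | chain h => cases h with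
    | base y z => exact .chain (.cons x (.base y z))
    | cons y h => exact .chain (.cons x (.cons y h))
  | conj _ _ ihF ihG => exact .conj ihF ihG
  | disj _ _ ihF ihG => exact .disj ihF ihG

lemma UCE.recursiveReduce {A : Type} (c : A → A) {F : GF A} (hF : UCE F) :
    UCE (recursiveReduce c F) := by
  induction hF with
  | base y => exact .base _
  | chain h =>
    induction h with
    | base y z => exact .disj (.base _) (UCE.distOb y (.base _))
    | cons y _ ih => exact .disj (.base _) (UCE.distOb y ih)
  | conj _ _ ihF ihG => exact .disj ihF ihG
  | disj _ _ ihF ihG => exact .conj ihF ihG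

/-- On unit chain expansions `recursiveReduce` is semantic negation. For a chain with head of
value `a` and tail of value `t` this is the identity `max (1 - a) (min a (1 - t)) = 1 - min a t`
for `a, t ∈ {0, 1}`. The prefix `ψ` is universally quantified since tails are evaluated
after a longer prefix. -/
lemma Frame.valAux_recursiveReduce {A : Type} {c : A → A} (M : Frame A c) {F : GF A}
    (hF : UCE F) : ∀ ψ, M.valAux ψ (recursiveReduce c F) = 1 - M.valAux ψ F := by
  induction hF with
  | base y => intro ψ; simp [GradualLogic.recursiveReduce, Frame.valAux, M.Icompl]
  | chain h =>
    induction h with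
    | base y z =>
      intro ψ
      simp only [GradualLogic.recursiveReduce, Frame.valAux, M.valAux_distOb, M.Icompl]
      rcases M.I01 ψ y with h | h <;> rw [h] <;> omega
    | cons y _ ih =>
      intro ψ
      simp only [GradualLogic.recursiveReduce, Frame.valAux, M.valAux_distOb, M.Icompl, ih]
      rcases M.I01 ψ y with h | h <;> rw [h] <;> omega
  | conj _ _ ihF ihG =>
    intro ψ; simp only [GradualLogic.recursiveReduce, Frame.valAux, ihF, ihG]; omega
  | disj _ _ ihF ihG =>
    intro ψ; simp only [GradualLogic.recursiveReduce, Frame.valAux, ihF, ihG]; omega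

/-- Elementary double negation: for any unit chain
F = s₀ ⋗ s₁ ⋗ ⋯ ⋗ s_k (k ∈ ℕ, i.e. any element of 𝔘 ∪ 𝒮) and any valuation
frame M, [M ⊨ F] = [M ⊨ recursiveReduce (recursiveReduce F)]. -/
theorem elementary_double_negation (A : Type) [Countable A] [Infinite A]
    (c : A → A) (hc : Function.Involutive c)
    (F : GF A) (hF : (∃ x : GS A, F = GF.base x) ∨ IsUnitChain F)
    (M : Frame A c) :
    M.val F = M.val (recursiveReduce c (recursiveReduce c F)) := by
  have hU : UCE F := by
    rcases hF with ⟨x, rfl⟩ | h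
    · exact .base x
    · exact .chain h
  have h1 := M.valAux_le_one F []
  simp only [Frame.val]
  rw [M.valAux_recursiveReduce (hU.recursiveReduce c), M.valAux_recursiveReduce hU]
  omega

end GradualLogic
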